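/- (Structure of the zero-inclusion set) Let f : (Fin ℓ → ℝ) → ℂ be continuous, let Q ⊆ (Fin ℓ → ℝ) be compact and convex, and let q⁰ ∈ Q. Then the set T := {κ : ℝ | 0 ≤ κ ∧ 0 ∈ f '' (κ-inflation of Q about q⁰)} is closed, and it is upward closed: if κ ∈ T and κ' ≥ κ then κ' ∈ T. -/

import Mathlib

/-!
The equation `f (q₀ + κ • (q - q₀)) = z` cuts out a closed set of pairs `(κ, q)`, and projecting
along a compact set of `q` is a closed map. For `0 ≤ κ ≤ κ'`, inflating by `κ` is shrinking by
`κ / κ'` and then inflating by `κ'`, also in the case `κ = κ' = 0`, where `κ / κ' = 0`. Since `Q` is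
star-shaped about `q₀`, the shrunken copy lies in `Q`, so the inflations of `Q` are nested.
-/

section Inflation

variable {𝕜 E : Type*} [AddCommGroup E]

/-- The `κ`-inflation `κQ` of a set `Q` about a point `q₀`. The stability margin is determined by
the factors `κ` for which the value set of `κQ` excludes the origin. The scalar `κ` may be negative
or zero. -/
def inflation [SMul 𝕜 E] (q₀ : E) (κ : 𝕜) (Q : Set E) : Set E :=
  (fun q => q₀ + κ • (q - q₀)) '' Q

theorem inflation_mul [Monoid 𝕜] [MulAction 𝕜 E] (q₀ : E) (κ μ : 𝕜) (Q : Set E) :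
    inflation q₀ (κ * μ) Q = inflation q₀ κ (inflation q₀ μ Q) := by
  simp only [inflation, Set.image_image, add_sub_cancel_left, mul_smul]

theorem monotone_inflation [SMul 𝕜 E] (q₀ : E) (κ : 𝕜) : Monotone (inflation q₀ κ) :=
  Set.monotone_image

theorem inflation_subset_of_starConvex [Ring 𝕜] [PartialOrder 𝕜] [AddRightMono 𝕜] [Module 𝕜 E]
    {q₀ : E} {Q : Set E} (hQ : StarConvex 𝕜 q₀ Q) {μ : 𝕜} (hμ₀ : 0 ≤ μ) (hμ₁ : μ ≤ 1) :
    inflation q₀ μ Q ⊆ Q :=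
  Set.image_subset_iff.mpr fun _ hq => hQ.add_smul_sub_mem hq hμ₀ hμ₁

theorem monotoneOn_inflation_of_starConvex [Field 𝕜] [LinearOrder 𝕜] [IsStrictOrderedRing 𝕜]
    [Module 𝕜 E] {q₀ : E} {Q : Set E} (hQ : StarConvex 𝕜 q₀ Q) :
    MonotoneOn (fun κ : 𝕜 => inflation q₀ κ Q) (Set.Ici 0) := by
  intro κ (hκ : 0 ≤ κ) κ' (hκ' : 0 ≤ κ') hle
  have hfactor : κ' * (κ / κ') = κ := mul_div_cancel_of_imp' fun h => le_antisymm (h ▸ hle) hκ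
  calc inflation q₀ κ Q = inflation q₀ κ' (inflation q₀ (κ / κ') Q) := by
        rw [← inflation_mul, hfactor]
    _ ⊆ inflation q₀ κ' Q := monotone_inflation q₀ κ' <|
        inflation_subset_of_starConvex hQ (div_nonneg hκ hκ') (div_le_one_of_le₀ hle hκ')

theorem isClosed_setOf_mem_image_inflation {Z : Type*} [TopologicalSpace 𝕜] [TopologicalSpace E]
    [IsTopologicalAddGroup E] [SMul 𝕜 E] [ContinuousSMul 𝕜 E] [TopologicalSpace Z] [T1Space Z]
    {f : E → Z} (hf : Continuous f) {Q : Set E} (hQ : IsCompact Q) (q₀ : E) (z : Z) :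
    IsClosed {κ : 𝕜 | z ∈ f '' inflation q₀ κ Q} := by
  have hC : IsClosed {p : 𝕜 × E | f (q₀ + p.1 • (p.2 - q₀)) = z} :=
    isClosed_singleton.preimage (by fun_prop)
  simp only [inflation, Set.image_image]
  exact hC.relPreimage_of_isCompact hQ

theorem zero_inclusion_set_structure_general {Z : Type*} [Field 𝕜] [LinearOrder 𝕜]
    [IsStrictOrderedRing 𝕜] [TopologicalSpace 𝕜] [ClosedIciTopology 𝕜] [TopologicalSpace E]
    [IsTopologicalAddGroup E] [Module 𝕜 E] [ContinuousSMul 𝕜 E] [TopologicalSpace Z] [T1Space Z]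
    {f : E → Z} (hf : Continuous f) {Q : Set E} (hQc : IsCompact Q) {q₀ : E}
    (hQ : StarConvex 𝕜 q₀ Q) (z : Z) :
    IsClosed {κ : 𝕜 | 0 ≤ κ ∧ z ∈ f '' inflation q₀ κ Q} ∧
      IsUpperSet {κ : 𝕜 | 0 ≤ κ ∧ z ∈ f '' inflation q₀ κ Q} := by
  constructor
  · exact isClosed_Ici.inter (isClosed_setOf_mem_image_inflation hf hQc q₀ z)
  · rintro κ κ' hle ⟨hκ, hz⟩
    have hκ' : 0 ≤ κ' := hκ.trans hle
    exact ⟨hκ', Set.image_mono (monotoneOn_inflation_of_starConvex hQ hκ hκ' hle) hz⟩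

end Inflation

/-- **Structure of the zero-inclusion set.** For `f` continuous, `Q` compact convex and
`q⁰ ∈ Q`, the set of nonnegative inflations `κ` at which the value set of the
`κ`-inflated `Q` contains the origin is closed and upward closed. -/
theorem zero_inclusion_set_structure (ℓ : ℕ) (f : (Fin ℓ → ℝ) → ℂ)
    (hf : Continuous f) (Q : Set (Fin ℓ → ℝ)) (hQc : IsCompact Q) (hQconv : Convex ℝ Q)
    (q₀ : Fin ℓ → ℝ) (hq₀ : q₀ ∈ Q) :
    IsClosed {κ : ℝ | 0 ≤ κ ∧
        (0 : ℂ) ∈ f '' ((fun q => q₀ + κ • (q - q₀)) '' Q)} ∧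
      ∀ κ ∈ {κ : ℝ | 0 ≤ κ ∧ (0 : ℂ) ∈ f '' ((fun q => q₀ + κ • (q - q₀)) '' Q)},
        ∀ κ' : ℝ, κ ≤ κ' →
          κ' ∈ {κ : ℝ | 0 ≤ κ ∧ (0 : ℂ) ∈ f '' ((fun q => q₀ + κ • (q - q₀)) '' Q)} := by
  obtain ⟨hclosed, hupper⟩ := zero_inclusion_set_structure_general hf hQc (hQconv.starConvex hq₀) 0
  exact ⟨hclosed, fun _ hκ _ hle => hupper hle hκ⟩
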